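/- Let d ≥ 3 and let B : ℝ^d → ℝ^{d×d} be a smooth compactly supported map with skew-symmetric values satisfying the closedness condition ∂_j B_{kl} + ∂_k B_{lj} + ∂_l B_{jk} = 0. Let A be the Poincaré-gauge potential A_j(x) := ∫_0^1 (∑_l x_l B_{lj}(u x)) u du, for s ≥ 0 set A_s(y) := e^{s/2} A(e^{s/2} y), and let λ_B(s) be the infimum over nonzero ψ ∈ C_c^∞(ℝ^d, ℂ) of ( ∫_{ℝ^d} |∇ψ(y) − iA_s(y)ψ(y)|² dy − ((d−2)/2)² ∫ |ψ(y)|²/|y|² dy + (1/16) ∫ |y|² |ψ(y)|² dy ) / ∫ |ψ|² dy. Then λ_B(s) → 1/2 as s → ∞. -/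

import Mathlib

open MeasureTheory Real Filter

/-- The Poincaré-gauge vector potential `A_j(x) := ∫_0^1 (∑_l x_l B_{lj}(u x)) u du`. -/
noncomputable def poincareGauge (d : ℕ)
    (B : EuclideanSpace ℝ (Fin d) → Fin d → Fin d → ℝ)
    (x : EuclideanSpace ℝ (Fin d)) (j : Fin d) : ℝ :=
  ∫ u in (0:ℝ)..1, (∑ l, x l * B (u • x) l j) * u

/-- The quadratic form `l_s[ψ]` of the operator `(−i∇ − A_s)² − c_d/|y|² + |y|²/16`
with the singularly scaled potential `A_s(y) := e^{s/2} A(e^{s/2} y)`. -/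
noncomputable def lsFormP (d : ℕ)
    (A : EuclideanSpace ℝ (Fin d) → Fin d → ℝ) (s : ℝ)
    (ψ : EuclideanSpace ℝ (Fin d) → ℂ) : ℝ :=
  (∫ y, ∑ j, ‖fderiv ℝ ψ y (EuclideanSpace.single j (1:ℝ))
      - Complex.I * (Real.exp (s/2) * A (Real.exp (s/2) • y) j : ℝ) * ψ y‖ ^ 2)
  - ((d - 2 : ℝ)/2)^2 * (∫ y, ‖ψ y‖^2 / ‖y‖^2)
  + (1/16 : ℝ) * ∫ y, ‖y‖^2 * ‖ψ y‖^2

/-- The lowest eigenvalue `λ_B(s)` of the singularly scaled operator `L_s`,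
as the infimum of the Rayleigh quotient. -/
noncomputable def lambdaB (d : ℕ)
    (A : EuclideanSpace ℝ (Fin d) → Fin d → ℝ) (s : ℝ) : ℝ :=
  sInf {q : ℝ | ∃ ψ : EuclideanSpace ℝ (Fin d) → ℂ,
    ContDiff ℝ (⊤ : ℕ∞) ψ ∧ HasCompactSupport ψ ∧ ψ ≠ 0 ∧
    q = lsFormP d A s ψ / ∫ y, ‖ψ y‖^2}

/-!
For `d ≥ 3` the segments issuing from one of two opposite far away points avoid `supp B`, unless
they end in a bounded set or behind it. Hence the Poincaré gauges centred at these two points vanish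
on two open sets which cover a neighbourhood of infinity and meet in a connected set, and `A`, which
differs from each of them by a gradient, is itself a gradient `∇χ` outside a ball. So for large `s`
the gauge transformation `e^{iχ(e^{s/2} y)}` removes the field from any given state supported away
from the origin.

Completing the square by `-∇ log W`, with `W(y) = |y|^{-(d-2)/2} e^{-|y|²/8}` the singular ground
state, shows that `⟨ψ, L_s ψ⟩ - ‖ψ‖²/2` is a nonnegative integral, which gives `λ_B(s) ≥ 1/2`.
Without a field, this integral is of order `1/N` for `W` cut off by a function of `log |y| / N`,
since the cut-off only costs `∫ dr / (N² r)` over `e^{-cN} ≤ r ≤ e^{cN}`.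
-/

open scoped ContDiff Topology

section ParametricIntegral

universe u

lemma hasFDerivAt_intervalIntegral_of_continuous {E G : Type*} [NormedAddCommGroup E]
    [NormedSpace ℝ E] [NormedAddCommGroup G] [NormedSpace ℝ G] {F : E → ℝ → G}
    {F' : E → ℝ → E →L[ℝ] G} (hF : Continuous F.uncurry) (hF' : Continuous F'.uncurry)
    (hder : ∀ x u, HasFDerivAt (F · u) (F' x u) x) (a b : ℝ) (x : E) :
    HasFDerivAt (fun x => ∫ u in a..b, F x u) (∫ u in a..b, F' x u) x := by
  obtain ⟨C, hC⟩ := (isCompact_uIcc (a := a) (b := b)).exists_bound_of_continuousOn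
    (hF'.comp (Continuous.prodMk_right x)).continuousOn
  have hbound : ∀ᶠ y in 𝓝 x, ∀ u ∈ Set.uIcc a b, ‖F' y u‖ ≤ C + 1 := by
    refine isCompact_uIcc.eventually_forall_of_forall_eventually fun u hu => ?_
    filter_upwards [hF'.norm.continuousAt.eventually_lt_const
      ((hC u hu).trans_lt (lt_add_one C))] with p hp using hp.le
  exact intervalIntegral.hasFDerivAt_integral_of_dominated_of_fderiv_le hbound
    (.of_forall fun y => (hF.comp (Continuous.prodMk_right y)).aestronglyMeasurable)
    ((hF.comp (Continuous.prodMk_right x)).intervalIntegrable _ _)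
    (hF'.comp (Continuous.prodMk_right x)).aestronglyMeasurable
    (.of_forall fun u hu y hy => hy u (Set.uIoc_subset_uIcc hu))
    intervalIntegrable_const (.of_forall fun u _ y _ => hder y u)

lemma contDiff_intervalIntegral_of_contDiff_uncurry_nat {E : Type u} [NormedAddCommGroup E]
    [NormedSpace ℝ E] (a b : ℝ) (n : ℕ) :
    ∀ {G : Type u} [NormedAddCommGroup G] [NormedSpace ℝ G] {F : E → ℝ → G},
      ContDiff ℝ n F.uncurry → ContDiff ℝ n fun x => ∫ u in a..b, F x u := by
  induction n with
  | zero =>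
    intro G _ _ F hF
    rw [Nat.cast_zero, contDiff_zero] at hF ⊢
    exact intervalIntegral.continuous_parametric_intervalIntegral_of_continuous' hF a b
  | succ n ih =>
    intro G _ _ F hF
    push_cast at hF ⊢
    have hF' := (contDiff_succ_iff_fderiv.1 hF).2.2.clm_comp
      (contDiff_const (c := ContinuousLinearMap.inl ℝ E ℝ))
    let F' : E → ℝ → E →L[ℝ] G := fun x u =>
      (fderiv ℝ F.uncurry (x, u)).comp (ContinuousLinearMap.inl ℝ E ℝ)
    have hder : ∀ x u, HasFDerivAt (F · u) (F' x u) x := fun x u =>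
      HasFDerivAt.comp (g := F.uncurry) (f := fun x => (x, u)) x
        (hF.differentiable (by simp) (x, u)).hasFDerivAt (hasFDerivAt_prodMk_left x u)
    exact contDiff_succ_iff_hasFDerivAt.2 ⟨_, ih (F := F') hF',
      hasFDerivAt_intervalIntegral_of_continuous hF.continuous (F' := F') hF'.continuous hder a b⟩

lemma contDiff_intervalIntegral_of_contDiff_uncurry {E G : Type u} [NormedAddCommGroup E]
    [NormedSpace ℝ E] [NormedAddCommGroup G] [NormedSpace ℝ G] {F : E → ℝ → G}
    (hF : ContDiff ℝ ∞ F.uncurry) (a b : ℝ) :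
    ContDiff ℝ ∞ fun x => ∫ u in a..b, F x u :=
  contDiff_infty.2 fun n => contDiff_intervalIntegral_of_contDiff_uncurry_nat a b n
    (contDiff_infty.1 hF n)

end ParametricIntegral

section RadialGauge

set_option maxSynthPendingDepth 3

variable {E : Type*} [NormedAddCommGroup E] [NormedSpace ℝ E]

/-- The radial (Poincaré, or Fock–Schwinger) gauge with centre `p`: the `1`-form which the homotopy
operator of the Poincaré lemma, contracting `E` to `p`, attaches to a `2`-form `β`. It is a
potential of `β`, annihilates radial directions, and only depends on `β` along segments from `p`. -/
noncomputable def radialGauge (β : E → E →L[ℝ] E →L[ℝ] ℝ) (p x : E) : E →L[ℝ] ℝ :=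
  ∫ u in (0 : ℝ)..1, u • β (p + u • (x - p)) (x - p)

variable {β : E → E →L[ℝ] E →L[ℝ] ℝ}

lemma contDiff_radialGauge (hβ : ContDiff ℝ ∞ β) (p : E) : ContDiff ℝ ∞ (radialGauge β p) := by
  refine contDiff_intervalIntegral_of_contDiff_uncurry
    (F := fun x u => u • β (p + u • (x - p)) (x - p)) ?_ 0 1
  unfold Function.uncurry
  fun_prop

lemma radialGauge_eq_zero {p x : E} (h : ∀ u ∈ Set.Icc (0 : ℝ) 1, β (p + u • (x - p)) = 0) :
    radialGauge β p x = 0 := by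
  rw [radialGauge, intervalIntegral.integral_congr (g := fun _ => 0) fun u hu => ?_,
    intervalIntegral.integral_zero]
  rw [Set.uIcc_of_le zero_le_one] at hu
  simp only [h u hu, zero_apply, smul_zero]

lemma continuous_fderiv_radialGauge_integrand (hβ : ContDiff ℝ 1 β) (p : E) :
    Continuous fun q : E × ℝ => q.2 • β (p + q.2 • (q.1 - p)) +
      q.2 ^ 2 • (fderiv ℝ β (p + q.2 • (q.1 - p))).flip (q.1 - p) := by
  have hβc := hβ.continuous
  have hβ' := hβ.continuous_fderiv one_ne_zero
  have hflip : Continuous fun q : E × ℝ => (fderiv ℝ β (p + q.2 • (q.1 - p))).flip :=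
    (ContinuousLinearMap.flipₗᵢ ℝ E E (E →L[ℝ] ℝ)).continuous.comp
      (hβ'.comp (f := fun q : E × ℝ => p + q.2 • (q.1 - p)) (by fun_prop))
  fun_prop

lemma hasFDerivAt_radialGauge (hβ : ContDiff ℝ 1 β) (p x : E) :
    HasFDerivAt (radialGauge β p) (∫ u in (0 : ℝ)..1, (u • β (p + u • (x - p)) +
      u ^ 2 • (fderiv ℝ β (p + u • (x - p))).flip (x - p))) x := by
  refine hasFDerivAt_intervalIntegral_of_continuous
    (F := fun x u => u • β (p + u • (x - p)) (x - p)) (F' := fun x u => u • β (p + u • (x - p)) +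
      u ^ 2 • (fderiv ℝ β (p + u • (x - p))).flip (x - p)) ?_
    (continuous_fderiv_radialGauge_integrand hβ p) (fun y u => ?_) 0 1 x
  · have hβc := hβ.continuous
    unfold Function.uncurry
    fun_prop
  · have hsub : HasFDerivAt (fun y : E => y - p) (ContinuousLinearMap.id ℝ E) y :=
      (hasFDerivAt_id y).sub_const p
    have hray : HasFDerivAt (fun y : E => p + u • (y - p)) (u • ContinuousLinearMap.id ℝ E) y :=
      (hsub.const_smul u).const_add p
    have hβray := ((hβ.differentiable one_ne_zero) (p + u • (y - p))).hasFDerivAt.comp y hray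
    refine ((hβray.clm_apply hsub).const_smul u).congr_fderiv ?_
    ext v w
    simp [pow_two, mul_assoc]

/-- A closed `2`-form, as a field of bilinear forms: the cyclic sum of the derivative is the
exterior derivative because `β` is skew-symmetric. -/
structure IsClosedTwoForm (β : E → E →L[ℝ] E →L[ℝ] ℝ) : Prop where
  skew : ∀ x v w, β x w v = -β x v w
  fderiv_cyclic_sum : ∀ x u v w,
    fderiv ℝ β x u v w + fderiv ℝ β x v w u + fderiv ℝ β x w u v = 0

lemma hasFDerivAt_apply_apply (hβ : Differentiable ℝ β) (x v w : E) :
    HasFDerivAt (fun x => β x v w) (((fderiv ℝ β x).flip v).flip w) x := by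
  simpa using ((hβ x).hasFDerivAt.clm_apply (hasFDerivAt_const v x)).clm_apply
    (hasFDerivAt_const w x)

lemma fderiv_apply_apply_swap (hβ : Differentiable ℝ β) (hskew : ∀ x v w, β x w v = -β x v w)
    (x u v w : E) : fderiv ℝ β x u w v = -fderiv ℝ β x u v w := by
  have hneg : HasFDerivAt (fun x => β x w v) (-((fderiv ℝ β x).flip v).flip w) x := by
    simpa only [hskew _ v w] using (hasFDerivAt_apply_apply hβ x v w).fun_neg
  exact DFunLike.congr_fun ((hasFDerivAt_apply_apply hβ x w v).unique hneg) u

lemma hasDerivAt_sq_mul_apply_ray (hβ : Differentiable ℝ β) (hclosed : IsClosedTwoForm β)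
    (p h v w : E) (u : ℝ) :
    HasDerivAt (fun u : ℝ => u ^ 2 * β (p + u • h) v w)
      ((u • β (p + u • h) + u ^ 2 • (fderiv ℝ β (p + u • h)).flip h) v w -
        (u • β (p + u • h) + u ^ 2 • (fderiv ℝ β (p + u • h)).flip h) w v) u := by
  have hray : HasDerivAt (fun u : ℝ => p + u • h) h u := by
    simpa using ((hasDerivAt_id u).smul_const h).const_add p
  have hβray : HasDerivAt (fun u : ℝ => β (p + u • h) v w) (fderiv ℝ β (p + u • h) h v w) u := by
    simpa using (((hβ _).hasFDerivAt.comp_hasDerivAt u hray).clm_apply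
      (hasDerivAt_const u v)).clm_apply (hasDerivAt_const u w)
  refine ((hasDerivAt_pow 2 u).mul hβray).congr_deriv ?_
  simp only [add_apply, smul_apply, ContinuousLinearMap.flip_apply, smul_eq_mul, hclosed.skew _ v w]
  linear_combination u ^ 2 * hclosed.fderiv_cyclic_sum (p + u • h) h v w -
    u ^ 2 * fderiv_apply_apply_swap hβ hclosed.skew (p + u • h) v h w

lemma fderiv_radialGauge_sub (hβ : ContDiff ℝ 1 β) (hclosed : IsClosedTwoForm β) (p x v w : E) :
    fderiv ℝ (radialGauge β p) x v w - fderiv ℝ (radialGauge β p) x w v = β x v w := by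
  set D : ℝ → E →L[ℝ] E →L[ℝ] ℝ := fun u =>
    u • β (p + u • (x - p)) + u ^ 2 • (fderiv ℝ β (p + u • (x - p))).flip (x - p)
  have hD : Continuous D :=
    (continuous_fderiv_radialGauge_integrand hβ p).comp (Continuous.prodMk_right x)
  have hint (y z : E) : IntervalIntegrable (fun u => D u y z) volume 0 1 :=
    ((hD.clm_apply continuous_const).clm_apply continuous_const).intervalIntegrable _ _
  have happly (y z : E) : fderiv ℝ (radialGauge β p) x y z = ∫ u in (0 : ℝ)..1, D u y z := by
    rw [(hasFDerivAt_radialGauge hβ p x).fderiv,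
      ContinuousLinearMap.intervalIntegral_apply (hD.intervalIntegrable _ _),
      ContinuousLinearMap.intervalIntegral_apply
        ((hD.clm_apply continuous_const).intervalIntegrable _ _)]
  rw [happly, happly, ← intervalIntegral.integral_sub (hint v w) (hint w v),
    intervalIntegral.integral_eq_sub_of_hasDerivAt
      (fun u _ => hasDerivAt_sq_mul_apply_ray (hβ.differentiable one_ne_zero) hclosed p
        (x - p) v w u) ((hint v w).sub (hint w v))]
  simp

lemma exists_hasFDerivAt_radialGauge_sub (hβ : ContDiff ℝ 1 β) (hclosed : IsClosedTwoForm β)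
    (p q : E) :
    ∃ χ : E → ℝ, ∀ x, HasFDerivAt χ (radialGauge β p x - radialGauge β q x) x := by
  have hdiff (p : E) : Differentiable ℝ (radialGauge β p) := fun x =>
    (hasFDerivAt_radialGauge hβ p x).differentiableAt
  obtain ⟨χ, hχ⟩ := convex_univ.exists_forall_hasFDerivAt_of_fderiv_symmetric isOpen_univ
    ((hdiff p).sub (hdiff q)).differentiableOn fun x _ v w => by
      rw [fderiv_sub (hdiff p x) (hdiff q x)]
      have hp := fderiv_radialGauge_sub hβ hclosed p x v w
      have hq := fderiv_radialGauge_sub hβ hclosed q x v w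
      simp only [sub_apply]
      linarith
  exact ⟨χ, fun x => hχ x (Set.mem_univ x)⟩

end RadialGauge

section Exactness

variable {E : Type*} [NormedAddCommGroup E] [NormedSpace ℝ E]

lemma exists_hasFDerivAt_union {G : Type*} [NormedAddCommGroup G] [NormedSpace ℝ G]
    {η : E → E →L[ℝ] G} {f g : E → G} {U V : Set E} (hU : IsOpen U) (hV : IsOpen V)
    (hUV : IsPreconnected (U ∩ V)) (hf : ∀ x ∈ U, HasFDerivAt f (η x) x)
    (hg : ∀ x ∈ V, HasFDerivAt g (η x) x) :
    ∃ h : E → G, ∀ x ∈ U ∪ V, HasFDerivAt h (η x) x := by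
  classical
  have hsub : ∀ x ∈ U ∩ V, HasFDerivAt (fun x => f x - g x) (0 : E →L[ℝ] G) x := fun x hx => by
    simpa using (hf x hx.1).fun_sub (hg x hx.2)
  obtain ⟨c, hc⟩ := (hU.inter hV).exists_is_const_of_fderiv_eq_zero (𝕜 := ℝ) hUV
    (fun x hx => (hsub x hx).differentiableAt.differentiableWithinAt)
    fun x hx => (hsub x hx).fderiv
  refine ⟨U.piecewise f fun x => g x + c, ?_⟩
  rintro x (hx | hx)
  · refine (hf x hx).congr_of_eventuallyEq ?_
    filter_upwards [hU.mem_nhds hx] with y hy using U.piecewise_eq_of_mem _ _ hy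
  · refine ((hg x hx).add_const c).congr_of_eventuallyEq ?_
    filter_upwards [hV.mem_nhds hx] with y hy
    by_cases hyU : y ∈ U
    · rw [U.piecewise_eq_of_mem _ _ hyU, ← hc y ⟨hyU, hy⟩, add_sub_cancel]
    · exact U.piecewise_eq_of_notMem _ _ hyU

variable {e : E} {ℓ : E →L[ℝ] ℝ}

lemma isPreconnected_setOf_abs_lt_and_lt_norm_sub (hE : 2 < Module.rank ℝ E) (he : ℓ e = 1)
    (r : ℝ) {ρ : ℝ} (hρ : 0 ≤ ρ) :
    IsPreconnected {x | |ℓ x| < r ∧ ρ < ‖x - ℓ x • e‖} := by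
  have hrank : 1 < Module.rank ℝ (E ⧸ Submodule.span ℝ {e}) := by
    by_contra! h
    refine hE.not_ge ?_
    rw [← Submodule.rank_quotient_add_rank (Submodule.span ℝ {e}), ← one_add_one_eq_two]
    exact add_le_add h ((rank_span_le _).trans (by simp))
  have hproj : ∀ z ∈ (Submodule.span ℝ {e} : Set E)ᶜ, z - ℓ z • e ≠ 0 := fun z hz h =>
    hz (Submodule.mem_span_singleton.2 ⟨ℓ z, (sub_eq_zero.1 h).symm⟩)
  have hconn := ((isConnected_compl_of_one_lt_codim hrank).isPreconnected.prod
    ((isPreconnected_Ioo (a := -r) (b := r)).prod (isPreconnected_Ioi (a := ρ)))).image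
    (fun q : E × ℝ × ℝ => q.2.1 • e + (q.2.2 / ‖q.1 - ℓ q.1 • e‖) • (q.1 - ℓ q.1 • e)) ?_
  · convert hconn using 1
    ext x
    constructor
    · rintro ⟨h1, h2⟩
      have hx : x - ℓ x • e ≠ 0 := norm_pos_iff.1 (hρ.trans_lt h2)
      refine ⟨(x, ℓ x, ‖x - ℓ x • e‖), ⟨fun hmem => hx ?_, abs_lt.1 h1, h2⟩, ?_⟩
      · obtain ⟨c, rfl⟩ := Submodule.mem_span_singleton.1 hmem
        simp [he]
      · simp [div_self (norm_ne_zero_iff.2 hx)]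
    · rintro ⟨⟨z, m, t⟩, ⟨hz, hm, ht⟩, rfl⟩
      have hz' := norm_ne_zero_iff.2 (hproj z hz)
      have ht0 : 0 < t := hρ.trans_lt ht
      have hℓ : ℓ (m • e + (t / ‖z - ℓ z • e‖) • (z - ℓ z • e)) = m := by simp [he]
      have hnorm : ‖(t / ‖z - ℓ z • e‖) • (z - ℓ z • e)‖ = t := by
        rw [norm_smul, norm_div, norm_norm, div_mul_cancel₀ _ hz', Real.norm_of_nonneg ht0.le]
      simpa only [Set.mem_ofPred_eq, hℓ, add_sub_cancel_left, hnorm] using ⟨abs_lt.2 hm, ht⟩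
  · refine ContinuousOn.add (by fun_prop) (ContinuousOn.smul (ContinuousOn.div (by fun_prop)
      (by fun_prop) fun q hq => norm_ne_zero_iff.2 (hproj q.1 hq.1)) (by fun_prop))

variable {β : E → E →L[ℝ] E →L[ℝ] ℝ} {R : ℝ}

lemma radialGauge_smul_eq_zero (he : ℓ e = 1) (hR : 0 < R)
    (hsupp : ∀ x, R ≤ |ℓ x| ∨ R ≤ ‖x - ℓ x • e‖ → β x = 0) {x : E} (hx : -R < ℓ x)
    (hx' : 2 * R < ‖x - ℓ x • e‖ ∨ 2 * R < ℓ x) : radialGauge β ((4 * R) • e) x = 0 := by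
  refine radialGauge_eq_zero fun u ⟨hu0, hu1⟩ => hsupp _ ?_
  set z := (4 * R) • e + u • (x - (4 * R) • e)
  have hℓz : ℓ z = (1 - u) * (4 * R) + u * ℓ x := by
    simp only [z, map_add, map_smul, map_sub, he, smul_eq_mul]
    ring
  have hz : z - ℓ z • e = u • (x - ℓ x • e) := by
    rw [hℓz]
    module
  rw [hz, norm_smul, Real.norm_of_nonneg hu0, hℓz]
  rcases le_total u 2⁻¹ with hu | hu
  · exact .inl (le_abs.2 (.inl (by nlinarith)))
  · rcases hx' with h | h
    · exact .inr (by nlinarith)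
    · exact .inl (le_abs.2 (.inl (by nlinarith)))

lemma exists_hasFDerivAt_radialGauge_zero_of_lt (hβ : ContDiff ℝ 1 β)
    (hclosed : IsClosedTwoForm β) (he : ℓ e = 1) (hR : 0 < R)
    (hsupp : ∀ x, R ≤ |ℓ x| ∨ R ≤ ‖x - ℓ x • e‖ → β x = 0) :
    ∃ χ : E → ℝ, ∀ x, -R < ℓ x → 2 * R < ‖x - ℓ x • e‖ ∨ 2 * R < ℓ x →
      HasFDerivAt χ (radialGauge β 0 x) x := by
  obtain ⟨χ, hχ⟩ := exists_hasFDerivAt_radialGauge_sub hβ hclosed 0 ((4 * R) • e)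
  refine ⟨χ, fun x hx hx' => ?_⟩
  simpa only [radialGauge_smul_eq_zero he hR hsupp hx hx', sub_zero] using hχ x

lemma exists_forall_eq_zero_of_hasCompactSupport {F : Type*} [Zero F] {f : E → F}
    (hsupp : HasCompactSupport f) (ℓ : E →L[ℝ] ℝ) (e : E) :
    ∃ R : ℝ, 0 < R ∧ ∀ x, R ≤ |ℓ x| ∨ R ≤ ‖x - ℓ x • e‖ → f x = 0 := by
  obtain ⟨C, hC⟩ := hsupp.isCompact.exists_bound_of_continuousOn
    (f := fun x => (ℓ x, x - ℓ x • e)) (by fun_prop)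
  refine ⟨max C 0 + 1, by positivity, fun x hx => image_eq_zero_of_notMem_tsupport fun hmem => ?_⟩
  obtain ⟨h1, h2⟩ := norm_prod_le_iff.1 (hC x hmem)
  have := le_max_left C 0
  rcases hx with hx | hx
  · linarith [Real.norm_eq_abs (ℓ x)]
  · linarith

lemma exists_hasFDerivAt_radialGauge_zero_of_lt_or_lt (hE : 2 < Module.rank ℝ E)
    (hβ : ContDiff ℝ 1 β) (hclosed : IsClosedTwoForm β) (he : ℓ e = 1) (hR : 0 < R)
    (hsupp : ∀ x, R ≤ |ℓ x| ∨ R ≤ ‖x - ℓ x • e‖ → β x = 0) :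
    ∃ χ : E → ℝ, ∀ x, 2 * R < |ℓ x| ∨ 2 * R < ‖x - ℓ x • e‖ →
      HasFDerivAt χ (radialGauge β 0 x) x := by
  obtain ⟨f, hf⟩ := exists_hasFDerivAt_radialGauge_zero_of_lt hβ hclosed he hR hsupp
  obtain ⟨g, hg⟩ := exists_hasFDerivAt_radialGauge_zero_of_lt (ℓ := -ℓ) (e := -e) hβ hclosed
    (by simpa using he) hR (by simpa using hsupp)
  -- Points of `U` are visible from `4R • e`, and points of `V` from `-4R • e`, along segments
  -- which avoid the support of `β`.
  let U : Set E := {x | -R < ℓ x ∧ (2 * R < ‖x - ℓ x • e‖ ∨ 2 * R < ℓ x)}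
  let V : Set E := {x | ℓ x < R ∧ (2 * R < ‖x - ℓ x • e‖ ∨ 2 * R < -ℓ x)}
  have hU : IsOpen U := by
    simp only [U, Set.ofPred_and, Set.ofPred_or]
    exact (isOpen_lt (by fun_prop) (by fun_prop)).inter
      ((isOpen_lt (by fun_prop) (by fun_prop)).union (isOpen_lt (by fun_prop) (by fun_prop)))
  have hV : IsOpen V := by
    simp only [V, Set.ofPred_and, Set.ofPred_or]
    exact (isOpen_lt (by fun_prop) (by fun_prop)).inter
      ((isOpen_lt (by fun_prop) (by fun_prop)).union (isOpen_lt (by fun_prop) (by fun_prop)))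
  have hUV : U ∩ V = {x | |ℓ x| < R ∧ 2 * R < ‖x - ℓ x • e‖} := by
    refine Set.Subset.antisymm ?_ fun x ⟨h, h'⟩ =>
      ⟨⟨(abs_lt.1 h).1, .inl h'⟩, (abs_lt.1 h).2, .inl h'⟩
    rintro x ⟨⟨h1, h2⟩, h3, -⟩
    exact ⟨abs_lt.2 ⟨h1, h3⟩, h2.resolve_right fun h => by linarith⟩
  obtain ⟨χ, hχ⟩ := exists_hasFDerivAt_union (η := radialGauge β 0) hU hV
    (hUV ▸ isPreconnected_setOf_abs_lt_and_lt_norm_sub hE he R (by positivity))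
    (fun x hx => hf x hx.1 hx.2) (fun x hx => hg x (by simpa using hx.1) (by simpa using hx.2))
  refine ⟨χ, fun x hx => hχ x ?_⟩
  rcases hx with h | h
  · rcases lt_abs.1 h with h | h
    · exact .inl ⟨by linarith, .inr h⟩
    · exact .inr ⟨by linarith, .inr h⟩
  · rcases lt_or_ge (-R) (ℓ x) with hx | hx
    · exact .inl ⟨hx, .inl h⟩
    · exact .inr ⟨by linarith, .inl h⟩

theorem exists_hasFDerivAt_radialGauge_zero (hE : 2 < Module.rank ℝ E) (hβ : ContDiff ℝ 1 β)
    (hsupp : HasCompactSupport β) (hclosed : IsClosedTwoForm β) :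
    ∃ (r : ℝ) (χ : E → ℝ), ∀ x, r < ‖x‖ → HasFDerivAt χ (radialGauge β 0 x) x := by
  have : Nontrivial E := rank_pos_iff_nontrivial.1 (two_pos.trans hE)
  obtain ⟨e, he0⟩ := exists_ne (0 : E)
  obtain ⟨ℓ, he⟩ := SeparatingDual.exists_eq_one (R := ℝ) he0
  obtain ⟨R, hR, hβR⟩ := exists_forall_eq_zero_of_hasCompactSupport hsupp ℓ e
  obtain ⟨χ, hχ⟩ :=
    exists_hasFDerivAt_radialGauge_zero_of_lt_or_lt hE hβ hclosed he hR hβR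
  refine ⟨2 * R * (1 + ‖e‖), χ, fun x hx => hχ x ?_⟩
  by_contra! h
  have hnorm := norm_add_le (x - ℓ x • e) (ℓ x • e)
  rw [sub_add_cancel, norm_smul, Real.norm_eq_abs] at hnorm
  nlinarith [norm_nonneg e]

end Exactness

section Coordinates

set_option maxSynthPendingDepth 3

variable {d : ℕ} {B : EuclideanSpace ℝ (Fin d) → Fin d → Fin d → ℝ}

/-- The `2`-form `∑ j k, B_{jk} dx_j ⊗ dx_k` of a tensor field `B`. -/
noncomputable def tensorForm (B : EuclideanSpace ℝ (Fin d) → Fin d → Fin d → ℝ)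
    (x : EuclideanSpace ℝ (Fin d)) :
    EuclideanSpace ℝ (Fin d) →L[ℝ] EuclideanSpace ℝ (Fin d) →L[ℝ] ℝ :=
  ∑ j, ∑ k, B x j k • (EuclideanSpace.proj j).smulRight (EuclideanSpace.proj (𝕜 := ℝ) k)

lemma tensorForm_apply_apply (x v w : EuclideanSpace ℝ (Fin d)) :
    tensorForm B x v w = ∑ j, ∑ k, B x j k * (v j * w k) := by
  simp [tensorForm]

lemma tensorForm_skew (hB : ∀ x j k, B x k j = -B x j k) (x v w : EuclideanSpace ℝ (Fin d)) :
    tensorForm B x w v = -tensorForm B x v w := by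
  rw [tensorForm_apply_apply, tensorForm_apply_apply, Finset.sum_comm, ← Finset.sum_neg_distrib]
  refine Finset.sum_congr rfl fun j _ => ?_
  rw [← Finset.sum_neg_distrib]
  exact Finset.sum_congr rfl fun k _ => by rw [hB x j k]; ring

lemma contDiff_tensorForm {n : WithTop ℕ∞} (hB : ∀ j k, ContDiff ℝ n fun x => B x j k) :
    ContDiff ℝ n (tensorForm B) :=
  ContDiff.sum fun j _ => ContDiff.sum fun k _ => (hB j k).smul contDiff_const

lemma radialGauge_tensorForm_apply_single
    (hB : ∀ j k, Continuous fun x => B x j k) (x : EuclideanSpace ℝ (Fin d)) (j : Fin d) :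
    radialGauge (tensorForm B) 0 x (EuclideanSpace.single j 1) = poincareGauge d B x j := by
  have hβ : Continuous (tensorForm B) :=
    (contDiff_tensorForm fun j k => contDiff_zero.2 (hB j k)).continuous
  rw [radialGauge, ContinuousLinearMap.intervalIntegral_apply
    (Continuous.intervalIntegrable (by fun_prop) _ _), poincareGauge]
  refine intervalIntegral.integral_congr fun u _ => ?_
  simp [tensorForm_apply_apply, Finset.mul_sum, mul_comm]

lemma continuous_poincareGauge (hB : ∀ j k, ContDiff ℝ ∞ fun x => B x j k) (j : Fin d) :
    Continuous (poincareGauge d B · j) := by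
  simp only [← radialGauge_tensorForm_apply_single fun j k => (hB j k).continuous]
  exact (contDiff_radialGauge (contDiff_tensorForm hB) 0).continuous.clm_apply continuous_const

lemma hasCompactSupport_tensorForm (hB : ∀ j k, HasCompactSupport fun x => B x j k) :
    HasCompactSupport (tensorForm B) := by
  refine HasCompactSupport.intro (isCompact_iUnion fun j => isCompact_iUnion fun k =>
    (hB j k).isCompact) fun x hx => ?_
  simp only [Set.mem_iUnion, not_exists] at hx
  refine Finset.sum_eq_zero fun j _ => Finset.sum_eq_zero fun k _ => ?_
  rw [image_eq_zero_of_notMem_tsupport (hx j k), zero_smul]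

lemma sum_smul_single (u : EuclideanSpace ℝ (Fin d)) :
    ∑ i, u i • EuclideanSpace.single i (1 : ℝ) = u := by
  simpa using (EuclideanSpace.basisFun (Fin d) ℝ).sum_repr u

lemma fderiv_tensorForm_apply (hB : ∀ j k, ContDiff ℝ 1 fun x => B x j k)
    (x u v w : EuclideanSpace ℝ (Fin d)) :
    fderiv ℝ (tensorForm B) x u v w = ∑ i, ∑ j, ∑ k, u i * v j * w k *
      fderiv ℝ (fun y => B y j k) x (EuclideanSpace.single i 1) := by
  have hder : HasFDerivAt (fun x => tensorForm B x v w)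
      (∑ j, ∑ k, (v j * w k) • fderiv ℝ (fun y => B y j k) x) x := by
    simp only [tensorForm_apply_apply]
    exact HasFDerivAt.fun_sum fun j _ => HasFDerivAt.fun_sum fun k _ =>
      ((hB j k).differentiable one_ne_zero x).hasFDerivAt.mul_const _
  have h := DFunLike.congr_fun ((hasFDerivAt_apply_apply
    ((contDiff_tensorForm hB).differentiable one_ne_zero) x v w).unique hder) u
  simp only [ContinuousLinearMap.flip_apply] at h
  rw [h]
  conv_lhs => rw [← sum_smul_single u, map_sum]
  simp [mul_assoc, Finset.mul_sum]

lemma fderiv_tensorForm_cyclic_sum (hB : ∀ j k, ContDiff ℝ 1 fun x => B x j k)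
    (hclosed : ∀ (x : EuclideanSpace ℝ (Fin d)) (j k l : Fin d),
      fderiv ℝ (fun y => B y k l) x (EuclideanSpace.single j (1 : ℝ))
      + fderiv ℝ (fun y => B y l j) x (EuclideanSpace.single k (1 : ℝ))
      + fderiv ℝ (fun y => B y j k) x (EuclideanSpace.single l (1 : ℝ)) = 0)
    (x u v w : EuclideanSpace ℝ (Fin d)) :
    fderiv ℝ (tensorForm B) x u v w + fderiv ℝ (tensorForm B) x v w u +
      fderiv ℝ (tensorForm B) x w u v = 0 := by
  simp only [fderiv_tensorForm_apply hB]
  rw [Finset.sum_comm_cycle (f := fun i j k => v i * w j * u k * _),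
    ← Finset.sum_comm_cycle (f := fun j k i => w i * u j * v k * _)]
  simp only [← Finset.sum_add_distrib]
  refine Finset.sum_eq_zero fun i _ => Finset.sum_eq_zero fun j _ =>
    Finset.sum_eq_zero fun k _ => ?_
  linear_combination u i * v j * w k * hclosed x i j k

theorem exists_fderiv_eq_poincareGauge (hd : 3 ≤ d)
    (hBsmooth : ∀ j k, ContDiff ℝ ∞ fun x => B x j k)
    (hBsupp : ∀ j k, HasCompactSupport fun x => B x j k) (hBskew : ∀ x j k, B x k j = -B x j k)
    (hBclosed : ∀ (x : EuclideanSpace ℝ (Fin d)) (j k l : Fin d),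
      fderiv ℝ (fun y => B y k l) x (EuclideanSpace.single j (1 : ℝ))
      + fderiv ℝ (fun y => B y l j) x (EuclideanSpace.single k (1 : ℝ))
      + fderiv ℝ (fun y => B y j k) x (EuclideanSpace.single l (1 : ℝ)) = 0) :
    ∃ (r : ℝ) (χ : EuclideanSpace ℝ (Fin d) → ℝ), ∀ x, r < ‖x‖ → ContDiffAt ℝ ∞ χ x ∧
      ∀ j, fderiv ℝ χ x (EuclideanSpace.single j 1) = poincareGauge d B x j := by
  have hB1 : ∀ j k, ContDiff ℝ 1 fun x => B x j k := fun j k => (hBsmooth j k).of_le (by simp)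
  obtain ⟨r, χ, hχ⟩ := exists_hasFDerivAt_radialGauge_zero (β := tensorForm B)
    (by rw [← Module.finrank_eq_rank, finrank_euclideanSpace_fin]; exact_mod_cast hd)
    (contDiff_tensorForm hB1) (hasCompactSupport_tensorForm hBsupp)
    ⟨tensorForm_skew hBskew, fderiv_tensorForm_cyclic_sum hB1 hBclosed⟩
  have hopen : IsOpen {x : EuclideanSpace ℝ (Fin d) | r < ‖x‖} :=
    isOpen_lt continuous_const continuous_norm
  have hsmooth : ContDiffOn ℝ ∞ χ {x | r < ‖x‖} := by
    rw [contDiffOn_infty_iff_fderiv_of_isOpen hopen]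
    exact ⟨fun x hx => (hχ x hx).differentiableAt.differentiableWithinAt,
      (contDiff_radialGauge (contDiff_tensorForm hBsmooth) 0).contDiffOn.congr
        fun x hx => (hχ x hx).fderiv⟩
  refine ⟨r, χ, fun x hx => ⟨hsmooth.contDiffAt (hopen.mem_nhds hx), fun j => ?_⟩⟩
  rw [(hχ x hx).fderiv, radialGauge_tensorForm_apply_single fun j k => (hBsmooth j k).continuous]

end Coordinates

section GroundState

lemma norm_sub_I_mul_add_mul_sq (D z : ℂ) (a F : ℝ) :
    ‖D - Complex.I * a * z + F * z‖ ^ 2 =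
      ‖D - Complex.I * a * z‖ ^ 2 + F * (2 * inner ℝ z D) + F ^ 2 * ‖z‖ ^ 2 := by
  simp only [Complex.sq_norm, Complex.normSq_apply, Complex.inner, Complex.sub_re, Complex.sub_im,
    Complex.add_re, Complex.add_im, Complex.mul_re, Complex.mul_im, Complex.I_re, Complex.I_im,
    Complex.ofReal_re, Complex.ofReal_im, Complex.conj_re, Complex.conj_im]
  ring

variable {E : Type*} [NormedAddCommGroup E] [MeasurableSpace E] [BorelSpace E] {μ : Measure E}

lemma integrable_of_continuousAt_tsupport [IsFiniteMeasureOnCompacts μ] {f : E → ℝ} {ψ : E → ℂ}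
    (hψ : HasCompactSupport ψ) (hf : ∀ y ∈ tsupport ψ, ContinuousAt f y)
    (hf0 : ∀ y ∉ tsupport ψ, f y = 0) : Integrable f μ := by
  have hsub : tsupport f ⊆ tsupport ψ := closure_minimal
    (fun y hy => by_contra fun h => hy (hf0 y h)) (isClosed_tsupport ψ)
  exact (continuous_of_tsupport fun y hy => hf y (hsub hy)).integrable_of_hasCompactSupport
    (hψ.of_isClosed_subset (isClosed_tsupport f) hsub)

lemma integrable_mul_norm_sq [IsFiniteMeasureOnCompacts μ] {w : E → ℝ} {ψ : E → ℂ}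
    (hψ : Continuous ψ) (hc : HasCompactSupport ψ) (hw : ∀ y ∈ tsupport ψ, ContinuousAt w y) :
    Integrable (fun y => w y * ‖ψ y‖ ^ 2) μ :=
  integrable_of_continuousAt_tsupport hc (fun y hy => by have := hw y hy; fun_prop)
    fun y hy => by simp [image_eq_zero_of_notMem_tsupport hy]

lemma integrable_norm_sq [IsFiniteMeasureOnCompacts μ] {ψ : E → ℂ} (hψ : Continuous ψ)
    (hc : HasCompactSupport ψ) : Integrable (fun y => ‖ψ y‖ ^ 2) μ := by
  simpa only [one_mul] using
    integrable_mul_norm_sq (μ := μ) (w := fun _ => 1) hψ hc fun _ _ => continuousAt_const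

variable [NormedSpace ℝ E] {ψ : E → ℂ} {F α : E → ℝ}

lemma integrable_norm_fderiv_sub_add_sq [IsFiniteMeasureOnCompacts μ] (hψ : ContDiff ℝ 1 ψ)
    (hc : HasCompactSupport ψ) (hF : ∀ y ∈ tsupport ψ, ContinuousAt F y) (hα : Continuous α)
    (v : E) :
    Integrable (fun y => ‖fderiv ℝ ψ y v - Complex.I * α y * ψ y + F y * ψ y‖ ^ 2) μ := by
  have : Continuous (fderiv ℝ ψ) := hψ.continuous_fderiv one_ne_zero
  have hψc := hψ.continuous
  refine integrable_of_continuousAt_tsupport hc (fun y hy => ?_) fun y hy => ?_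
  · have hFy := Complex.continuous_ofReal.continuousAt.comp (hF y hy)
    fun_prop
  · simp [image_eq_zero_of_notMem_tsupport hy, fderiv_of_notMem_tsupport ℝ hy]

lemma integrable_fderiv_sub_sq_mul_norm_sq [IsFiniteMeasureOnCompacts μ] (hψ : Continuous ψ)
    (hc : HasCompactSupport ψ) (hF : ∀ y ∈ tsupport ψ, ContDiffAt ℝ 1 F y) (v : E) :
    Integrable (fun y => (fderiv ℝ F y v - F y ^ 2) * ‖ψ y‖ ^ 2) μ :=
  integrable_mul_norm_sq hψ hc fun y hy => by
    have hF' : ContinuousAt F y := (hF y hy).continuousAt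
    have hFy' : ContinuousAt (fderiv ℝ F) y :=
      ((hF y hy).fderiv_right (m := 0) (by simp)).continuousAt
    fun_prop

variable [FiniteDimensional ℝ E] [μ.IsAddHaarMeasure]

lemma integral_mul_two_inner_fderiv_eq_neg (hψ : ContDiff ℝ 1 ψ) (hc : HasCompactSupport ψ)
    (hF : ∀ y ∈ tsupport ψ, ContDiffAt ℝ 1 F y) (v : E) :
    ∫ y, F y * (2 * inner ℝ (ψ y) (fderiv ℝ ψ y v)) ∂μ = -∫ y, fderiv ℝ F y v * ‖ψ y‖ ^ 2 ∂μ := by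
  have hψc := hψ.continuous
  have : Continuous (fderiv ℝ ψ) := hψ.continuous_fderiv one_ne_zero
  have hder : ∀ y, HasFDerivAt (fun y => ‖ψ y‖ ^ 2) (2 • (innerSL ℝ (ψ y)).comp (fderiv ℝ ψ y)) y :=
    fun y => (hψ.differentiable one_ne_zero y).hasFDerivAt.norm_sq
  have hder' : ∀ y, fderiv ℝ (fun y => ‖ψ y‖ ^ 2) y v = 2 * inner ℝ (ψ y) (fderiv ℝ ψ y v) :=
    fun y => by simp [(hder y).fderiv, mul_add]
  have hsub : tsupport (fun y => ‖ψ y‖ ^ 2) ⊆ tsupport ψ :=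
    closure_mono fun y hy h => hy (by simp [h])
  simp_rw [← hder']
  refine integral_mul_fderiv_eq_neg_fderiv_mul_of_integrable ?_ ?_ ?_
    (fun y hy => (hF y (hsub hy)).differentiableAt one_ne_zero)
    fun y _ => (hder y).differentiableAt
  · refine integrable_mul_norm_sq hψc hc fun y hy => ?_
    have hF' := ((hF y hy).fderiv_right (m := 0) (by simp)).continuousAt
    fun_prop
  · refine integrable_of_continuousAt_tsupport hc (fun y hy => ?_) fun y hy => ?_
    · have hFc := (hF y hy).continuousAt
      simp only [hder']
      fun_prop
    · simp [hder', image_eq_zero_of_notMem_tsupport hy]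
  · exact integrable_mul_norm_sq hψc hc fun y hy => (hF y hy).continuousAt

lemma integral_norm_fderiv_sub_sq (hψ : ContDiff ℝ 1 ψ) (hc : HasCompactSupport ψ)
    (hF : ∀ y ∈ tsupport ψ, ContDiffAt ℝ 1 F y) (hα : Continuous α) (v : E) :
    ∫ y, ‖fderiv ℝ ψ y v - Complex.I * α y * ψ y‖ ^ 2 ∂μ =
      ∫ y, ‖fderiv ℝ ψ y v - Complex.I * α y * ψ y + F y * ψ y‖ ^ 2 ∂μ +
        ∫ y, (fderiv ℝ F y v - F y ^ 2) * ‖ψ y‖ ^ 2 ∂μ := by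
  have hψc := hψ.continuous
  have : Continuous (fderiv ℝ ψ) := hψ.continuous_fderiv one_ne_zero
  have hdiv := integrable_fderiv_sub_sq_mul_norm_sq (μ := μ) hψc hc hF v
  have hsq : Integrable (fun y => F y ^ 2 * ‖ψ y‖ ^ 2) μ :=
    integrable_mul_norm_sq hψc hc fun y hy => (hF y hy).continuousAt.pow 2
  have hcross : Integrable (fun y => F y * (2 * inner ℝ (ψ y) (fderiv ℝ ψ y v))) μ :=
    integrable_of_continuousAt_tsupport hc (fun y hy => by have := (hF y hy).continuousAt; fun_prop)
      fun y hy => by simp [image_eq_zero_of_notMem_tsupport hy]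
  have hkin : Integrable (fun y => ‖fderiv ℝ ψ y v - Complex.I * α y * ψ y‖ ^ 2) μ := by
    simpa using integrable_norm_fderiv_sub_add_sq (F := 0) hψ hc (fun _ _ => continuousAt_const)
      hα v
  have hdiv' : Integrable (fun y => fderiv ℝ F y v * ‖ψ y‖ ^ 2) μ :=
    (hdiv.add hsq).congr (.of_forall fun y => by simp only [Pi.add_apply]; ring)
  simp_rw [norm_sub_I_mul_add_mul_sq, sub_mul]
  rw [integral_add (hkin.fun_add hcross) hsq, integral_add hkin hcross, integral_sub hdiv' hsq,
    integral_mul_two_inner_fderiv_eq_neg hψ hc hF]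
  ring

end GroundState

section Hardy

variable {d : ℕ} {α : EuclideanSpace ℝ (Fin d) → Fin d → ℝ} {ψ : EuclideanSpace ℝ (Fin d) → ℂ}

/-- The `j`-th component of the covariant derivative `∇ψ - iαψ` for the vector potential `α`. -/
noncomputable def covariantDeriv (α : EuclideanSpace ℝ (Fin d) → Fin d → ℝ)
    (ψ : EuclideanSpace ℝ (Fin d) → ℂ) (y : EuclideanSpace ℝ (Fin d)) (j : Fin d) : ℂ :=
  fderiv ℝ ψ y (EuclideanSpace.single j 1) - Complex.I * (α y j : ℝ) * ψ y

/-- The quadratic form of `(-i∇ - α)² - c_d/|y|² + |y|²/16`, for an arbitrary vector potential `α`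
in place of `A_s`. -/
noncomputable def magneticForm (α : EuclideanSpace ℝ (Fin d) → Fin d → ℝ)
    (ψ : EuclideanSpace ℝ (Fin d) → ℂ) : ℝ :=
  (∫ y, ∑ j, ‖covariantDeriv α ψ y j‖ ^ 2) - ((d - 2 : ℝ) / 2) ^ 2 * (∫ y, ‖ψ y‖ ^ 2 / ‖y‖ ^ 2) +
    (1 / 16 : ℝ) * ∫ y, ‖y‖ ^ 2 * ‖ψ y‖ ^ 2

/-- For `ε = 0` this is `-∇ log W` with `W(y) = |y|^{-(d-2)/2} e^{-|y|²/8}` the positive solution of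
`(-Δ - c_d/|y|² + |y|²/16) W = W/2` on `ℝ^d ∖ {0}`; a positive `ε` removes the singularity. -/
noncomputable def hardyField (ε : ℝ) (y : EuclideanSpace ℝ (Fin d)) (j : Fin d) : ℝ :=
  ((d - 2) / 2 / (‖y‖ ^ 2 + ε) + 1 / 4) * y j

lemma hasFDerivAt_hardyField {ε : ℝ} {y : EuclideanSpace ℝ (Fin d)} (hy : ‖y‖ ^ 2 + ε ≠ 0)
    (j : Fin d) :
    HasFDerivAt (hardyField ε · j)
      (((d - 2) / 2 / (‖y‖ ^ 2 + ε) + 1 / 4) • EuclideanSpace.proj (𝕜 := ℝ) j +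
        y j • (-((d - 2) / 2 / (‖y‖ ^ 2 + ε) ^ 2) • (2 • innerSL ℝ y))) y := by
  refine HasFDerivAt.fun_mul ?_ (EuclideanSpace.proj (𝕜 := ℝ) j).hasFDerivAt
  have hden : HasFDerivAt (fun y : EuclideanSpace ℝ (Fin d) => ‖y‖ ^ 2 + ε) (2 • innerSL ℝ y) y :=
    (hasStrictFDerivAt_norm_sq y).hasFDerivAt.add_const ε
  have hinv : HasDerivAt (fun t : ℝ => (d - 2 : ℝ) / 2 / t + 1 / 4)
      (-((d - 2) / 2 / (‖y‖ ^ 2 + ε) ^ 2)) (‖y‖ ^ 2 + ε) := by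
    simpa only [div_eq_mul_inv _ (_ : ℝ), mul_neg] using
      ((hasDerivAt_inv hy).const_mul ((d - 2 : ℝ) / 2)).add_const (1 / 4 : ℝ)
  exact hinv.comp_hasFDerivAt y hden

lemma contDiffAt_hardyField {ε : ℝ} {y : EuclideanSpace ℝ (Fin d)} (hy : ‖y‖ ^ 2 + ε ≠ 0)
    (j : Fin d) : ContDiffAt ℝ 1 (hardyField ε · j) y :=
  (((contDiffAt_const.div ((contDiff_norm_sq ℝ).contDiffAt.add contDiffAt_const) hy).add
    contDiffAt_const).mul (EuclideanSpace.proj (𝕜 := ℝ) j).contDiff.contDiffAt)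

/-- The function `div F - |F|²` for `F = hardyField ε` in dimension `n`, in the variable `r = |y|²`:
completing the square by `F` turns it into a lower bound for `-Δ`. -/
noncomputable def hardyPotential (n ε r : ℝ) : ℝ :=
  n * ((n - 2) / 2 / (r + ε) + 1 / 4) - 2 * ((n - 2) / 2 / (r + ε) ^ 2) * r -
    ((n - 2) / 2 / (r + ε) + 1 / 4) ^ 2 * r

lemma hardyPotential_zero {n r : ℝ} (hr : r ≠ 0) :
    hardyPotential n 0 r = ((n - 2) / 2) ^ 2 / r + 1 / 2 - r / 16 := by
  rw [hardyPotential, add_zero]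
  field_simp
  ring

lemma le_hardyPotential {n r ε : ℝ} (hn : 2 ≤ n) (hr : 0 ≤ r) (hε : 0 < ε) :
    ((n - 2) / 2) ^ 2 / (r + ε) + 1 / 2 - r / 16 ≤ hardyPotential n ε r := by
  obtain ⟨a, rfl⟩ : ∃ a, n = 2 * a + 2 := ⟨(n - 2) / 2, by ring⟩
  have ha : 0 ≤ a := by linarith
  have hpos : 0 < r + ε := by linarith
  obtain ⟨q, hq⟩ : ∃ q, q = (r + ε)⁻¹ := ⟨_, rfl⟩
  have hq0 : 0 < q := hq ▸ inv_pos.2 hpos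
  have hrq : r * q ≤ 1 := by
    have : (r + ε) * q = 1 := by rw [hq]; exact mul_inv_cancel₀ hpos.ne'
    nlinarith
  have e : (2 * a + 2 - 2) / 2 = a := by ring
  simp only [hardyPotential, e, div_eq_mul_inv, ← inv_pow (r + ε), ← hq]
  have h1 := mul_nonneg (mul_nonneg ha hq0.le) (sub_nonneg.2 hrq)
  have h2 := mul_nonneg (mul_nonneg (sq_nonneg a) hq0.le) (sub_nonneg.2 hrq)
  have h3 := mul_nonneg ha (sub_nonneg.2 hrq)
  nlinarith

lemma sum_fderiv_hardyField_sub_sq {ε : ℝ} {y : EuclideanSpace ℝ (Fin d)}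
    (hy : ‖y‖ ^ 2 + ε ≠ 0) :
    ∑ j, (fderiv ℝ (hardyField ε · j) y (EuclideanSpace.single j 1) - hardyField ε y j ^ 2) =
      hardyPotential d ε (‖y‖ ^ 2) := by
  have hder : ∀ j, fderiv ℝ (hardyField ε · j) y (EuclideanSpace.single j 1) =
      ((d - 2) / 2 / (‖y‖ ^ 2 + ε) + 1 / 4) - 2 * ((d - 2) / 2 / (‖y‖ ^ 2 + ε) ^ 2) * y j ^ 2 :=
    fun j => by
      rw [(hasFDerivAt_hardyField hy j).fderiv]
      simp [EuclideanSpace.inner_single_right]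
      ring
  simp only [hder]
  simp only [hardyField, hardyPotential, mul_pow, Finset.sum_sub_distrib, ← Finset.mul_sum,
    ← EuclideanSpace.real_norm_sq_eq, Finset.sum_const, Finset.card_univ, Fintype.card_fin,
    nsmul_eq_mul]

lemma integral_sum_covariantDeriv_sq (hα : ∀ j, Continuous (α · j)) (hψ : ContDiff ℝ 1 ψ)
    (hc : HasCompactSupport ψ) {ε : ℝ} (hε : ∀ y ∈ tsupport ψ, ‖y‖ ^ 2 + ε ≠ 0) :
    ∫ y, ∑ j, ‖covariantDeriv α ψ y j‖ ^ 2 =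
      (∫ y, ∑ j, ‖covariantDeriv α ψ y j + hardyField ε y j * ψ y‖ ^ 2) +
        ∫ y, hardyPotential d ε (‖y‖ ^ 2) * ‖ψ y‖ ^ 2 := by
  have hF : ∀ j, ∀ y ∈ tsupport ψ, ContDiffAt ℝ 1 (hardyField ε · j) y := fun j y hy =>
    contDiffAt_hardyField (hε y hy) j
  have hdiv : ∀ y, hardyPotential d ε (‖y‖ ^ 2) * ‖ψ y‖ ^ 2 =
      ∑ j, (fderiv ℝ (hardyField ε · j) y (EuclideanSpace.single j 1) - hardyField ε y j ^ 2) *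
        ‖ψ y‖ ^ 2 := fun y => by
    by_cases hy : y ∈ tsupport ψ
    · rw [← Finset.sum_mul, sum_fderiv_hardyField_sub_sq (hε y hy)]
    · simp [image_eq_zero_of_notMem_tsupport hy]
  simp_rw [hdiv]
  rw [integral_finsetSum _ fun j _ => ?_, integral_finsetSum _ fun j _ => ?_,
    integral_finsetSum _ fun j _ => ?_, ← Finset.sum_add_distrib]
  · exact Finset.sum_congr rfl fun j _ => integral_norm_fderiv_sub_sq hψ hc (hF j) (hα j) _
  · exact integrable_fderiv_sub_sq_mul_norm_sq hψ.continuous hc (hF j) _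
  · exact integrable_norm_fderiv_sub_add_sq hψ hc (fun y hy => (hF j y hy).continuousAt) (hα j) _
  · simpa [covariantDeriv] using integrable_norm_fderiv_sub_add_sq (F := 0) (μ := volume) hψ hc
      (fun _ _ => continuousAt_const) (hα j) (EuclideanSpace.single j 1)

theorem magneticForm_eq_half_mul_integral_add (hα : ∀ j, Continuous (α · j))
    (hψ : ContDiff ℝ 1 ψ) (hc : HasCompactSupport ψ) (hψ0 : 0 ∉ tsupport ψ) :
    magneticForm α ψ = 1 / 2 * (∫ y, ‖ψ y‖ ^ 2) +
      ∫ y, ∑ j, ‖covariantDeriv α ψ y j + hardyField 0 y j * ψ y‖ ^ 2 := by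
  have hne : ∀ y ∈ tsupport ψ, ‖y‖ ^ 2 ≠ 0 := fun y hy =>
    pow_ne_zero 2 (norm_ne_zero_iff.2 fun h => hψ0 (h ▸ hy))
  have hψc := hψ.continuous
  have hmass : Integrable fun y => ‖ψ y‖ ^ 2 := integrable_norm_sq hψc hc
  have hosc : Integrable fun y => ‖y‖ ^ 2 * ‖ψ y‖ ^ 2 :=
    integrable_mul_norm_sq hψc hc fun y _ => by fun_prop
  have hhardy : Integrable fun y => ‖ψ y‖ ^ 2 / ‖y‖ ^ 2 := by
    simpa only [div_eq_inv_mul] using integrable_mul_norm_sq (w := fun y => (‖y‖ ^ 2)⁻¹)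
      (μ := volume) hψc hc fun y hy => by fun_prop (disch := exact hne y hy)
  have hdiv : ∀ y, hardyPotential d 0 (‖y‖ ^ 2) * ‖ψ y‖ ^ 2 =
      ((d - 2) / 2) ^ 2 * (‖ψ y‖ ^ 2 / ‖y‖ ^ 2) + 1 / 2 * ‖ψ y‖ ^ 2 -
        1 / 16 * (‖y‖ ^ 2 * ‖ψ y‖ ^ 2) := fun y => by
    by_cases hy : y ∈ tsupport ψ
    · rw [hardyPotential_zero (hne y hy)]
      ring
    · simp [image_eq_zero_of_notMem_tsupport hy]
  rw [magneticForm, integral_sum_covariantDeriv_sq hα hψ hc (ε := 0) (by simpa using hne)]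
  simp_rw [hdiv]
  rw [integral_sub ((hhardy.const_mul _).fun_add (hmass.const_mul _)) (hosc.const_mul _),
    integral_add (hhardy.const_mul _) (hmass.const_mul _), integral_const_mul, integral_const_mul,
    integral_const_mul]
  ring

lemma hardy_regularized (hd : 2 ≤ d) (hα : ∀ j, Continuous (α · j)) (hψ : ContDiff ℝ 1 ψ)
    (hc : HasCompactSupport ψ) {ε : ℝ} (hε : 0 < ε) :
    ((d - 2 : ℝ) / 2) ^ 2 * (∫ y, ‖ψ y‖ ^ 2 / (‖y‖ ^ 2 + ε)) + 1 / 2 * (∫ y, ‖ψ y‖ ^ 2) -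
      1 / 16 * (∫ y, ‖y‖ ^ 2 * ‖ψ y‖ ^ 2) ≤ ∫ y, ∑ j, ‖covariantDeriv α ψ y j‖ ^ 2 := by
  have hne : ∀ y : EuclideanSpace ℝ (Fin d), ‖y‖ ^ 2 + ε ≠ 0 := fun y => by positivity
  have hψc := hψ.continuous
  have hint {w : EuclideanSpace ℝ (Fin d) → ℝ} (hw : Continuous w) :
      Integrable fun y => w y * ‖ψ y‖ ^ 2 :=
    integrable_mul_norm_sq hψc hc fun y _ => hw.continuousAt
  have hhardy : Integrable fun y => ‖ψ y‖ ^ 2 / (‖y‖ ^ 2 + ε) := by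
    simpa only [div_eq_inv_mul] using hint (w := fun y => (‖y‖ ^ 2 + ε)⁻¹)
      (by fun_prop (disch := exact hne))
  have hmass : Integrable fun y => ‖ψ y‖ ^ 2 := integrable_norm_sq hψc hc
  have hosc : Integrable fun y => ‖y‖ ^ 2 * ‖ψ y‖ ^ 2 := hint (by fun_prop)
  rw [integral_sum_covariantDeriv_sq hα hψ hc fun y _ => hne y, ← integral_const_mul,
    ← integral_const_mul, ← integral_const_mul,
    ← integral_add (hhardy.const_mul _) (hmass.const_mul _),
    ← integral_sub ((hhardy.const_mul _).fun_add (hmass.const_mul _)) (hosc.const_mul _)]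
  refine le_add_of_nonneg_of_le (integral_nonneg fun y => by positivity)
    (integral_mono (((hhardy.const_mul _).fun_add (hmass.const_mul _)).sub (hosc.const_mul _))
      (hint (by unfold hardyPotential; fun_prop (disch := simp [hne]))) fun y => ?_)
  calc _ = (((d - 2 : ℝ) / 2) ^ 2 / (‖y‖ ^ 2 + ε) + 1 / 2 - ‖y‖ ^ 2 / 16) * ‖ψ y‖ ^ 2 := by ring
    _ ≤ hardyPotential d ε (‖y‖ ^ 2) * ‖ψ y‖ ^ 2 := by
      gcongr
      exact le_hardyPotential (by exact_mod_cast hd) (sq_nonneg ‖y‖) hε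

lemma integrable_norm_sq_div_norm_sq (hd : 3 ≤ d) (hψ : Continuous ψ) (hc : HasCompactSupport ψ) :
    Integrable fun y => ‖ψ y‖ ^ 2 / ‖y‖ ^ 2 := by
  have hloc : LocallyIntegrable fun y : EuclideanSpace ℝ (Fin d) => (‖y‖ ^ 2)⁻¹ :=
    locallyIntegrable_of_norm_le_rpow (C := 1) (α := 2) (by simp; omega)
      (by simpa using Nat.lt_of_succ_le hd) (.of_forall fun y => by simp) (by fun_prop)
  simpa [div_eq_inv_mul] using hloc.integrable_smul_right_of_hasCompactSupport
    (g := fun y => ‖ψ y‖ ^ 2) (by fun_prop) (hc.comp_left (g := fun z => ‖z‖ ^ 2) (by simp))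

theorem half_mul_integral_le_magneticForm (hd : 3 ≤ d) (hα : ∀ j, Continuous (α · j))
    (hψ : ContDiff ℝ 1 ψ) (hc : HasCompactSupport ψ) :
    1 / 2 * (∫ y, ‖ψ y‖ ^ 2) ≤ magneticForm α ψ := by
  have : NeZero d := ⟨by omega⟩
  have hψc := hψ.continuous
  have hne : ∀ᵐ y : EuclideanSpace ℝ (Fin d), y ≠ 0 := Measure.ae_ne volume 0
  have hlim : Tendsto (fun ε : ℝ => ∫ y, ‖ψ y‖ ^ 2 / (‖y‖ ^ 2 + ε)) (𝓝[>] 0)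
      (𝓝 (∫ y, ‖ψ y‖ ^ 2 / ‖y‖ ^ 2)) := by
    refine tendsto_integral_filter_of_dominated_convergence _
      (.of_forall fun ε =>
        ((hψc.measurable.norm.pow_const 2).div (by fun_prop)).aestronglyMeasurable)
      (eventually_mem_nhdsWithin.mono fun ε (hε : 0 < ε) => ?_)
      (integrable_norm_sq_div_norm_sq hd hψc hc) (hne.mono fun y hy => ?_)
    · filter_upwards [hne] with y hy
      have : 0 < ‖y‖ := norm_pos_iff.2 hy
      rw [Real.norm_of_nonneg (by positivity)]
      gcongr
      linarith
    · have hden : Tendsto (fun ε : ℝ => ‖y‖ ^ 2 + ε) (𝓝[>] 0) (𝓝 (‖y‖ ^ 2)) :=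
        (Continuous.tendsto' (by fun_prop) 0 _ (add_zero _)).mono_left nhdsWithin_le_nhds
      exact tendsto_const_nhds.div hden (by simpa using hy)
  have hle := le_of_tendsto (((hlim.const_mul (((d - 2 : ℝ) / 2) ^ 2)).add_const
    (1 / 2 * (∫ y, ‖ψ y‖ ^ 2))).sub_const (1 / 16 * (∫ y, ‖y‖ ^ 2 * ‖ψ y‖ ^ 2)))
    (eventually_mem_nhdsWithin.mono fun ε hε => hardy_regularized (by omega) hα hψ hc hε)
  rw [magneticForm]
  linarith

end Hardy

section TrialStates

variable {d : ℕ} {η : ContDiffBump (0 : ℝ)} {N M r : ℝ}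

/-- The radial profile of the positive solution `W(y) = |y|^{-(d-2)/2} e^{-|y|²/8}` of
`(-Δ - c_d/|y|² + |y|²/16) W = W/2` on `ℝ^d ∖ {0}`. -/
noncomputable def groundStateProfile (d : ℕ) (r : ℝ) : ℝ :=
  r ^ (-((d - 2 : ℝ) / 2)) * rexp (-(r ^ 2 / 8))

lemma hasDerivAt_groundStateProfile (hr : 0 < r) :
    HasDerivAt (groundStateProfile d)
      (-(((d - 2 : ℝ) / 2 / r + r / 4) * groundStateProfile d r)) r := by
  have hpow := Real.hasDerivAt_rpow_const (p := -((d - 2 : ℝ) / 2)) (.inl hr.ne')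
  have hexp := ((hasDerivAt_pow 2 r).div_const 8).fun_neg.exp
  refine (hpow.fun_mul hexp).congr_deriv ?_
  rw [Real.rpow_sub_one hr.ne', groundStateProfile]
  push_cast
  ring

lemma pow_pred_mul_groundStateProfile_sq (hd : 1 ≤ d) (hr : 0 < r) :
    r ^ (d - 1) * groundStateProfile d r ^ 2 = r * rexp (-(r ^ 2 / 4)) := by
  rw [groundStateProfile, mul_pow, ← mul_assoc, ← Real.exp_nat_mul, ← Real.rpow_natCast r (d - 1),
    ← Real.rpow_mul_natCast hr.le, ← Real.rpow_add hr]
  congr 1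
  · rw [Nat.cast_sub hd]
    convert Real.rpow_one r using 2
    push_cast
    ring
  · congr 1
    push_cast
    ring

lemma integral_groundStateProfile_sq_mul [NeZero d] (f : ℝ → ℝ) :
    ∫ y : EuclideanSpace ℝ (Fin d), groundStateProfile d ‖y‖ ^ 2 * f ‖y‖ =
      d * volume.real (Metric.ball (0 : EuclideanSpace ℝ (Fin d)) 1) *
        ∫ r in Set.Ioi (0 : ℝ), r * rexp (-(r ^ 2 / 4)) * f r := by
  rw [integral_fun_norm_addHaar volume fun r => groundStateProfile d r ^ 2 * f r]
  simp only [finrank_euclideanSpace, Fintype.card_fin, nsmul_eq_mul, smul_eq_mul, mul_assoc]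
  congr 2
  refine setIntegral_congr_fun measurableSet_Ioi fun r hr => ?_
  simp only [← mul_assoc, pow_pred_mul_groundStateProfile_sq NeZero.one_le hr]

/-- The profile of `W` cut off logarithmically near `0` and `∞` by means of `η`. -/
noncomputable def trialProfile (d : ℕ) (η : ContDiffBump (0 : ℝ)) (N r : ℝ) : ℝ :=
  groundStateProfile d r * η (log r / N)

lemma hasDerivAt_trialProfile (hr : 0 < r) :
    HasDerivAt (trialProfile d η N)
      (groundStateProfile d r * (deriv η (log r / N) / (N * r)) -
        ((d - 2 : ℝ) / 2 / r + r / 4) * trialProfile d η N r) r := by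
  have hcut : HasDerivAt (fun r => η (log r / N)) (deriv η (log r / N) * (r⁻¹ / N)) r :=
    (η.contDiff.differentiable one_ne_zero _).hasDerivAt.comp r
      ((Real.hasDerivAt_log hr.ne').div_const N)
  refine ((hasDerivAt_groundStateProfile hr).fun_mul hcut).congr_deriv ?_
  rw [trialProfile]
  ring

lemma log_div_notMem_tsupport (hN : 0 < N) (hr : 0 < r)
    (hr' : r ∉ Set.Icc (rexp (-(N * η.rOut))) (rexp (N * η.rOut))) : log r / N ∉ tsupport η := by
  rw [η.tsupport_eq, Metric.mem_closedBall, Real.dist_0_eq_abs, abs_le]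
  refine fun h => hr' ⟨(Real.le_log_iff_exp_le hr).1 ?_, (Real.log_le_iff_le_exp hr).1 ?_⟩
  · linarith [(le_div_iff₀' hN).1 h.1]
  · exact (div_le_iff₀' hN).1 h.2

lemma hasFDerivAt_comp_norm {E : Type*} [NormedAddCommGroup E] [InnerProductSpace ℝ E]
    {f : ℝ → ℝ} {f' : ℝ} {y : E} (hy : y ≠ 0) (hf : HasDerivAt f f' ‖y‖) :
    HasFDerivAt (fun y => f ‖y‖) ((f' / ‖y‖) • innerSL ℝ y) y := by
  have hnorm := (hasStrictFDerivAt_norm_sq y).hasFDerivAt.sqrt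
    (pow_ne_zero 2 (norm_ne_zero_iff.2 hy))
  simp only [Real.sqrt_sq (norm_nonneg _)] at hnorm
  refine (hf.comp_hasFDerivAt y hnorm).congr_fderiv ?_
  module

lemma sum_covariantDeriv_zero_add_hardyField_radial {f : ℝ → ℝ} {f' : ℝ}
    {y : EuclideanSpace ℝ (Fin d)} (hy : y ≠ 0) (hf : HasDerivAt f f' ‖y‖) :
    ∑ j, ‖covariantDeriv 0 (fun y => (f ‖y‖ : ℂ)) y j + hardyField 0 y j * f ‖y‖‖ ^ 2 =
      (f' + ((d - 2 : ℝ) / 2 / ‖y‖ + ‖y‖ / 4) * f ‖y‖) ^ 2 := by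
  have hy0 : ‖y‖ ≠ 0 := norm_ne_zero_iff.2 hy
  have hder := Complex.ofRealCLM.hasFDerivAt.comp y (hasFDerivAt_comp_norm hy hf)
  have hterm : ∀ j, covariantDeriv 0 (fun y => (f ‖y‖ : ℂ)) y j + hardyField 0 y j * f ‖y‖ =
      ((f' + ((d - 2 : ℝ) / 2 / ‖y‖ + ‖y‖ / 4) * f ‖y‖) / ‖y‖ * y j : ℝ) := fun j => by
    have hfd : fderiv ℝ (fun y : EuclideanSpace ℝ (Fin d) => (f ‖y‖ : ℂ)) y
        (EuclideanSpace.single j 1) = (f' / ‖y‖ * y j : ℝ) :=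
      (congrArg (fun L => L (EuclideanSpace.single j 1)) hder.fderiv).trans
        (by simp [EuclideanSpace.inner_single_right])
    rw [covariantDeriv, hfd, hardyField]
    simp only [Pi.zero_apply, Complex.ofReal_zero, mul_zero, zero_mul, sub_zero, add_zero]
    norm_cast
    field_simp
  simp_rw [hterm, Complex.norm_real, Real.norm_eq_abs, sq_abs, mul_pow]
  rw [← Finset.mul_sum, ← EuclideanSpace.real_norm_sq_eq, ← mul_pow, div_mul_cancel₀ _ hy0]

lemma tsupport_trialProfile_norm_subset (hd : 3 ≤ d) (hN : 0 < N) :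
    tsupport (fun y : EuclideanSpace ℝ (Fin d) => (trialProfile d η N ‖y‖ : ℂ)) ⊆
      (‖·‖) ⁻¹' Set.Icc (rexp (-(N * η.rOut))) (rexp (N * η.rOut)) := by
  refine closure_minimal (fun y => not_imp_comm.1 fun hy => ?_)
    (isClosed_Icc.preimage continuous_norm)
  rcases (norm_nonneg y).eq_or_lt with h0 | hpos
  · -- `0 ^ (-a) = 0` for `a ≠ 0`, so the singular profile vanishes at the origin.
    have ha : -((d - 2 : ℝ) / 2) ≠ 0 := by
      have : (3 : ℝ) ≤ d := by exact_mod_cast hd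
      linarith
    simp [trialProfile, groundStateProfile, ← h0, Real.zero_rpow ha]
  · simp [trialProfile, image_eq_zero_of_notMem_tsupport (log_div_notMem_tsupport hN hpos hy)]

lemma zero_notMem_tsupport_trialProfile_norm (hd : 3 ≤ d) (hN : 0 < N) :
    0 ∉ tsupport (fun y : EuclideanSpace ℝ (Fin d) => (trialProfile d η N ‖y‖ : ℂ)) := fun h => by
  simpa [(Real.exp_pos _).not_ge] using (tsupport_trialProfile_norm_subset hd hN h).1

lemma hasCompactSupport_trialProfile_norm (hd : 3 ≤ d) (hN : 0 < N) :
    HasCompactSupport (fun y : EuclideanSpace ℝ (Fin d) => (trialProfile d η N ‖y‖ : ℂ)) :=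
  (isCompact_closedBall 0 (rexp (N * η.rOut))).of_isClosed_subset (isClosed_tsupport _) fun _ hy =>
    mem_closedBall_zero_iff.2 (tsupport_trialProfile_norm_subset hd hN hy).2

lemma contDiff_of_contDiffAt_tsupport {E F : Type*} [NormedAddCommGroup E] [NormedSpace ℝ E]
    [NormedAddCommGroup F] [NormedSpace ℝ F] {n : ℕ∞} {f : E → F}
    (hf : ∀ y ∈ tsupport f, ContDiffAt ℝ n f y) : ContDiff ℝ n f :=
  (contMDiff_of_tsupport fun y hy => (hf y hy).contMDiffAt).contDiff

lemma contDiff_trialProfile_norm (hd : 3 ≤ d) (hN : 0 < N) :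
    ContDiff ℝ ∞ (fun y : EuclideanSpace ℝ (Fin d) => (trialProfile d η N ‖y‖ : ℂ)) :=
  contDiff_of_contDiffAt_tsupport fun y hy => by
    have hy0 : y ≠ 0 := fun h => zero_notMem_tsupport_trialProfile_norm hd hN (h ▸ hy)
    have hr : ‖y‖ ≠ 0 := norm_ne_zero_iff.2 hy0
    have hprofile : ContDiffAt ℝ ∞ (trialProfile d η N) ‖y‖ :=
      ((contDiffAt_id.rpow_const_of_ne hr).mul ((contDiffAt_id.pow 2).div_const 8).neg.exp).mul
        (η.contDiff.contDiffAt.comp _ ((Real.contDiffAt_log.2 hr).div_const N))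
    exact Complex.ofRealCLM.contDiff.contDiffAt.comp y (hprofile.comp y (contDiffAt_norm ℝ hy0))

lemma mul_deriv_cutoff_sq_le_indicator (hN : 0 < N) (hM : ∀ t, |deriv η t| ≤ M) (hr : 0 < r) :
    r * rexp (-(r ^ 2 / 4)) * (deriv η (log r / N) / (N * r)) ^ 2 ≤
      (Set.Icc (rexp (-(N * η.rOut))) (rexp (N * η.rOut))).indicator
        (fun r => (M / N) ^ 2 * r⁻¹) r := by
  by_cases hr' : r ∈ Set.Icc (rexp (-(N * η.rOut))) (rexp (N * η.rOut))
  · rw [Set.indicator_of_mem hr']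
    calc r * rexp (-(r ^ 2 / 4)) * (deriv η (log r / N) / (N * r)) ^ 2
        = rexp (-(r ^ 2 / 4)) * (|deriv η (log r / N)| / N) ^ 2 * r⁻¹ := by
          rw [div_pow _ N, sq_abs]
          field_simp
      _ ≤ 1 * (M / N) ^ 2 * r⁻¹ := by
          gcongr
          · exact Real.exp_le_one_iff.2 (by linarith [sq_nonneg r])
          · exact hM _
      _ = (M / N) ^ 2 * r⁻¹ := by rw [one_mul]
  · simp [Set.indicator_of_notMem hr',
      deriv_of_notMem_tsupport (log_div_notMem_tsupport hN hr hr')]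

lemma integral_Ioi_mul_deriv_cutoff_sq_le (hN : 0 < N) (hM : ∀ t, |deriv η t| ≤ M) :
    ∫ r in Set.Ioi (0 : ℝ), r * rexp (-(r ^ 2 / 4)) * (deriv η (log r / N) / (N * r)) ^ 2 ≤
      2 * η.rOut * M ^ 2 / N := by
  have hIcc : Set.Icc (rexp (-(N * η.rOut))) (rexp (N * η.rOut)) ⊆ Set.Ioi 0 := fun r hr =>
    (Real.exp_pos _).trans_le hr.1
  have hexp : rexp (-(N * η.rOut)) ≤ rexp (N * η.rOut) := by
    have := mul_pos hN η.rOut_pos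
    gcongr
    linarith
  have hint : IntegrableOn (fun r : ℝ => (M / N) ^ 2 * r⁻¹)
      (Set.Icc (rexp (-(N * η.rOut))) (rexp (N * η.rOut))) :=
    (continuousOn_const.mul (continuousOn_id.inv₀ fun r hr => (hIcc hr).ne')).integrableOn_Icc
  calc _ ≤ ∫ r in Set.Ioi (0 : ℝ), (Set.Icc (rexp (-(N * η.rOut))) (rexp (N * η.rOut))).indicator
          (fun r => (M / N) ^ 2 * r⁻¹) r :=
        integral_mono_of_nonneg
          (ae_restrict_of_forall_mem measurableSet_Ioi fun r (hr : 0 < r) => by positivity)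
          (hint.integrable_indicator measurableSet_Icc).integrableOn
          (ae_restrict_of_forall_mem measurableSet_Ioi fun _ =>
            mul_deriv_cutoff_sq_le_indicator hN hM)
    _ = (M / N) ^ 2 * (2 * (N * η.rOut)) := by
        rw [setIntegral_indicator measurableSet_Icc, Set.inter_eq_right.2 hIcc,
          integral_Icc_eq_integral_Ioc, ← intervalIntegral.integral_of_le hexp,
          intervalIntegral.integral_const_mul,
          integral_inv_of_pos (Real.exp_pos _) (Real.exp_pos _), ← Real.exp_sub, Real.log_exp]
        ring
    _ = 2 * η.rOut * M ^ 2 / N := by field_simp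

lemma exp_neg_one_le_integral_Ioi_mul_cutoff_sq (hN : 0 < N) (hηN : 1 ≤ N * η.rIn) :
    rexp (-1) ≤ ∫ r in Set.Ioi (0 : ℝ), r * rexp (-(r ^ 2 / 4)) * η (log r / N) ^ 2 := by
  have hint : Integrable fun r : ℝ => r * rexp (-(r ^ 2 / 4)) * η (log r / N) ^ 2 := by
    have hgauss : Integrable fun r : ℝ => r * rexp (-(r ^ 2 / 4)) := by
      simpa only [neg_mul, one_div, inv_mul_eq_div] using
        integrable_mul_exp_neg_mul_sq (b := 1 / 4) (by norm_num)
    refine hgauss.mul_bdd (c := 1) ?_ (.of_forall fun r => ?_)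
    · exact ((η.continuous.measurable.comp (by fun_prop)).pow_const 2).aestronglyMeasurable
    · rw [Real.norm_of_nonneg (sq_nonneg _)]
      exact pow_le_one₀ η.nonneg η.le_one
  have hbound : ∀ r ∈ Set.Icc (1 : ℝ) 2,
      rexp (-1) ≤ r * rexp (-(r ^ 2 / 4)) * η (log r / N) ^ 2 := fun r ⟨hr1, hr2⟩ => by
    have hη : η (log r / N) = 1 := η.one_of_mem_closedBall <| by
      rw [Metric.mem_closedBall, Real.dist_0_eq_abs,
        abs_of_nonneg (div_nonneg (Real.log_nonneg hr1) hN.le), div_le_iff₀' hN]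
      linarith [Real.log_le_sub_one_of_pos (one_pos.trans_le hr1)]
    rw [hη, one_pow, mul_one, ← one_mul (rexp (-1))]
    gcongr
    nlinarith
  calc rexp (-1) = ∫ r in Set.Icc (1 : ℝ) 2, rexp (-1) := by norm_num
    _ ≤ ∫ r in Set.Icc (1 : ℝ) 2, r * rexp (-(r ^ 2 / 4)) * η (log r / N) ^ 2 :=
      setIntegral_mono_on (by simp) hint.integrableOn measurableSet_Icc hbound
    _ ≤ _ := setIntegral_mono_set hint.integrableOn
      (ae_restrict_of_forall_mem measurableSet_Ioi fun r (hr : 0 < r) => by positivity)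
      (.of_forall fun r hr => one_pos.trans_le hr.1)

lemma integral_norm_sq_trialProfile [NeZero d] :
    ∫ y : EuclideanSpace ℝ (Fin d), ‖(trialProfile d η N ‖y‖ : ℂ)‖ ^ 2 =
      d * volume.real (Metric.ball (0 : EuclideanSpace ℝ (Fin d)) 1) *
        ∫ r in Set.Ioi (0 : ℝ), r * rexp (-(r ^ 2 / 4)) * η (log r / N) ^ 2 := by
  rw [← integral_groundStateProfile_sq_mul fun r => η (log r / N) ^ 2]
  simp_rw [Complex.norm_real, Real.norm_eq_abs, sq_abs, trialProfile, mul_pow]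

lemma integral_covariantDeriv_add_hardyField_trialProfile [NeZero d] :
    ∫ y : EuclideanSpace ℝ (Fin d), ∑ j,
        ‖covariantDeriv 0 (fun y => (trialProfile d η N ‖y‖ : ℂ)) y j +
          hardyField 0 y j * trialProfile d η N ‖y‖‖ ^ 2 =
      d * volume.real (Metric.ball (0 : EuclideanSpace ℝ (Fin d)) 1) *
        ∫ r in Set.Ioi (0 : ℝ),
          r * rexp (-(r ^ 2 / 4)) * (deriv η (log r / N) / (N * r)) ^ 2 := by
  rw [← integral_groundStateProfile_sq_mul fun r => (deriv η (log r / N) / (N * r)) ^ 2]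
  refine integral_congr_ae ((Measure.ae_ne volume 0).mono fun y hy => ?_)
  simp only [sum_covariantDeriv_zero_add_hardyField_radial hy
    (hasDerivAt_trialProfile (norm_pos_iff.2 hy)), sub_add_cancel, mul_pow]

theorem exists_magneticForm_zero_le (hd : 3 ≤ d) {δ : ℝ} (hδ : 0 < δ) :
    ∃ ψ : EuclideanSpace ℝ (Fin d) → ℂ, ContDiff ℝ ∞ ψ ∧ HasCompactSupport ψ ∧ 0 ∉ tsupport ψ ∧
      0 < (∫ y, ‖ψ y‖ ^ 2) ∧ magneticForm 0 ψ ≤ (1 / 2 + δ) * ∫ y, ‖ψ y‖ ^ 2 := by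
  have : NeZero d := ⟨by omega⟩
  have hC : 0 < d * volume.real (Metric.ball (0 : EuclideanSpace ℝ (Fin d)) 1) :=
    mul_pos (Nat.cast_pos.2 (by omega))
      (ENNReal.toReal_pos (Metric.measure_ball_pos _ _ one_pos).ne' measure_ball_lt_top.ne)
  let η : ContDiffBump (0 : ℝ) := default
  obtain ⟨M, hM⟩ := (η.contDiff.continuous_deriv le_rfl).bounded_above_of_compact_support
    η.hasCompactSupport.deriv
  obtain ⟨N, hNη, hNδ⟩ : ∃ N, η.rIn⁻¹ ≤ N ∧ 2 * η.rOut * M ^ 2 / (δ * rexp (-1)) ≤ N :=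
    ⟨_, le_max_left _ _, le_max_right _ _⟩
  have hN : 0 < N := (inv_pos.2 η.rIn_pos).trans_le hNη
  have hmass := exp_neg_one_le_integral_Ioi_mul_cutoff_sq hN
    ((inv_le_iff_one_le_mul₀ η.rIn_pos).1 hNη)
  have hrem := integral_Ioi_mul_deriv_cutoff_sq_le hN hM
  have hsmooth := contDiff_trialProfile_norm (η := η) hd hN
  have hsupp := hasCompactSupport_trialProfile_norm (η := η) hd hN
  have hzero := zero_notMem_tsupport_trialProfile_norm (η := η) hd hN
  refine ⟨fun y => (trialProfile d η N ‖y‖ : ℂ), hsmooth, hsupp, hzero, ?_, ?_⟩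
  · rw [integral_norm_sq_trialProfile]
    exact mul_pos hC ((Real.exp_pos _).trans_le hmass)
  · rw [magneticForm_eq_half_mul_integral_add (α := 0)
      (fun _ => continuous_const) (hsmooth.of_le (by simp)) hsupp hzero, add_mul]
    gcongr
    rw [integral_covariantDeriv_add_hardyField_trialProfile, integral_norm_sq_trialProfile,
      mul_left_comm δ]
    gcongr
    calc _ ≤ 2 * η.rOut * M ^ 2 / N := hrem
      _ ≤ δ * rexp (-1) := by
        rwa [div_le_comm₀ hN (by positivity)]
      _ ≤ _ := by gcongr

end TrialStates

section GaugeInvariance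

variable {d : ℕ} {α β : EuclideanSpace ℝ (Fin d) → Fin d → ℝ} {χ : EuclideanSpace ℝ (Fin d) → ℝ}
  {ψ : EuclideanSpace ℝ (Fin d) → ℂ}

/-- The gauge transform `e^{iχ} ψ`. -/
noncomputable def gaugeTransform {E : Type*} (χ : E → ℝ) (ψ : E → ℂ) (y : E) : ℂ :=
  Complex.exp (χ y * Complex.I) * ψ y

lemma norm_gaugeTransform {E : Type*} (χ : E → ℝ) (ψ : E → ℂ) (y : E) :
    ‖gaugeTransform χ ψ y‖ = ‖ψ y‖ := by
  rw [gaugeTransform, norm_mul, Complex.norm_exp_ofReal_mul_I, one_mul]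

lemma tsupport_gaugeTransform {E : Type*} [TopologicalSpace E] (χ : E → ℝ) (ψ : E → ℂ) :
    tsupport (gaugeTransform χ ψ) = tsupport ψ := by
  refine congrArg closure (Set.ext fun y => ?_)
  simp [gaugeTransform]

lemma contDiff_gaugeTransform {E : Type*} [NormedAddCommGroup E] [NormedSpace ℝ E]
    {χ : E → ℝ} {ψ : E → ℂ} {n : ℕ∞} (hψ : ContDiff ℝ n ψ)
    (hχ : ∀ y ∈ tsupport ψ, ContDiffAt ℝ n χ y) : ContDiff ℝ n (gaugeTransform χ ψ) := by
  refine contDiff_of_contDiffAt_tsupport fun y hy => ?_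
  rw [tsupport_gaugeTransform] at hy
  exact ((Complex.ofRealCLM.contDiff.contDiffAt.comp y (hχ y hy)).mul contDiffAt_const).cexp.mul
    hψ.contDiffAt

lemma covariantDeriv_gaugeTransform {y : EuclideanSpace ℝ (Fin d)} (hψ : DifferentiableAt ℝ ψ y)
    (hχ : DifferentiableAt ℝ χ y) {j : Fin d}
    (hαβ : fderiv ℝ χ y (EuclideanSpace.single j 1) = α y j - β y j) :
    covariantDeriv α (gaugeTransform χ ψ) y j =
      Complex.exp (χ y * Complex.I) * covariantDeriv β ψ y j := by
  have hder := ((Complex.ofRealCLM.hasFDerivAt.comp y hχ.hasFDerivAt).mul_const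
    Complex.I).cexp.mul hψ.hasFDerivAt
  have hfd : fderiv ℝ (gaugeTransform χ ψ) y (EuclideanSpace.single j 1) =
      Complex.exp (χ y * Complex.I) * (fderiv ℝ ψ y (EuclideanSpace.single j 1) +
        (α y j - β y j) * Complex.I * ψ y) :=
    (congrArg (fun L => L (EuclideanSpace.single j 1)) hder.fderiv).trans (by simp [hαβ]; ring)
  rw [covariantDeriv, hfd, covariantDeriv, gaugeTransform]
  ring

theorem magneticForm_gaugeTransform (hψ : Differentiable ℝ ψ)
    (hχ : ∀ y ∈ tsupport ψ, DifferentiableAt ℝ χ y)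
    (hαβ : ∀ y ∈ tsupport ψ, ∀ j, fderiv ℝ χ y (EuclideanSpace.single j 1) = α y j - β y j) :
    magneticForm α (gaugeTransform χ ψ) = magneticForm β ψ := by
  have hnorm : ∀ y j, ‖covariantDeriv α (gaugeTransform χ ψ) y j‖ = ‖covariantDeriv β ψ y j‖ :=
    fun y j => by
      by_cases hy : y ∈ tsupport ψ
      · rw [covariantDeriv_gaugeTransform (hψ y) (hχ y hy) (hαβ y hy j), norm_mul,
          Complex.norm_exp_ofReal_mul_I, one_mul]
      · have hy' : y ∉ tsupport (gaugeTransform χ ψ) := by rwa [tsupport_gaugeTransform]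
        simp [covariantDeriv, fderiv_of_notMem_tsupport ℝ hy, fderiv_of_notMem_tsupport ℝ hy',
          image_eq_zero_of_notMem_tsupport hy, image_eq_zero_of_notMem_tsupport hy']
  simp only [magneticForm, hnorm, norm_gaugeTransform]

end GaugeInvariance

section LowestEigenvalue

variable {d : ℕ} {A : EuclideanSpace ℝ (Fin d) → Fin d → ℝ}

/-- The singularly scaled potential `A_s(y) = e^{s/2} A(e^{s/2} y)`. -/
noncomputable def scaledPotential (A : EuclideanSpace ℝ (Fin d) → Fin d → ℝ) (s : ℝ)
    (y : EuclideanSpace ℝ (Fin d)) (j : Fin d) : ℝ :=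
  rexp (s / 2) * A (rexp (s / 2) • y) j

lemma lsFormP_eq_magneticForm (s : ℝ) (ψ : EuclideanSpace ℝ (Fin d) → ℂ) :
    lsFormP d A s ψ = magneticForm (scaledPotential A s) ψ :=
  rfl

lemma integral_norm_sq_pos {ψ : EuclideanSpace ℝ (Fin d) → ℂ} (hψ : Continuous ψ)
    (hc : HasCompactSupport ψ) (h0 : ψ ≠ 0) : 0 < ∫ y, ‖ψ y‖ ^ 2 := by
  obtain ⟨x, hx⟩ := Function.ne_iff.1 h0
  exact (hψ.norm.pow 2).integral_pos_of_hasCompactSupport_nonneg_nonzero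
    (hc.comp_left (g := fun z => ‖z‖ ^ 2) (by simp)) (fun y => by positivity)
    (x := x) (by simpa using hx)

lemma half_le_lsFormP_div (hd : 3 ≤ d) (hA : ∀ j, Continuous (A · j)) (s : ℝ)
    {ψ : EuclideanSpace ℝ (Fin d) → ℂ} (hψ : ContDiff ℝ 1 ψ) (hc : HasCompactSupport ψ)
    (h0 : ψ ≠ 0) : 1 / 2 ≤ lsFormP d A s ψ / ∫ y, ‖ψ y‖ ^ 2 := by
  rw [le_div_iff₀ (integral_norm_sq_pos hψ.continuous hc h0), lsFormP_eq_magneticForm]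
  exact half_mul_integral_le_magneticForm hd
    (fun j => continuous_const.mul ((hA j).comp (continuous_const_smul _))) hψ hc

theorem half_le_lambdaB (hd : 3 ≤ d) (hA : ∀ j, Continuous (A · j)) (s : ℝ) :
    1 / 2 ≤ lambdaB d A s := by
  obtain ⟨ψ, hψ, hc, -, hpos, -⟩ := exists_magneticForm_zero_le hd one_pos
  refine le_csInf ⟨_, ψ, hψ, hc, ?_, rfl⟩ ?_
  · rintro rfl
    simp at hpos
  · rintro _ ⟨ψ, hψ, hc, h0, rfl⟩
    exact half_le_lsFormP_div hd hA s (hψ.of_le (by simp)) hc h0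

lemma lambdaB_le_of_lsFormP_le (hd : 3 ≤ d) (hA : ∀ j, Continuous (A · j)) {s c : ℝ}
    {ψ : EuclideanSpace ℝ (Fin d) → ℂ} (hψ : ContDiff ℝ ∞ ψ) (hc : HasCompactSupport ψ)
    (hpos : 0 < ∫ y, ‖ψ y‖ ^ 2) (hle : lsFormP d A s ψ ≤ c * ∫ y, ‖ψ y‖ ^ 2) :
    lambdaB d A s ≤ c := by
  refine csInf_le_of_le ⟨1 / 2, ?_⟩ ⟨ψ, hψ, hc, ?_, rfl⟩ ((div_le_iff₀ hpos).2 hle)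
  · rintro _ ⟨φ, hφ, hφc, hφ0, rfl⟩
    exact half_le_lsFormP_div hd hA s (hφ.of_le (by simp)) hφc hφ0
  · rintro rfl
    simp at hpos

lemma eventually_forall_lt_norm_exp_smul {E : Type*} [NormedAddCommGroup E] [NormedSpace ℝ E]
    {K : Set E} (hK : IsClosed K) (h0 : 0 ∉ K) (R : ℝ) :
    ∀ᶠ s in atTop, ∀ y ∈ K, R < ‖rexp (s / 2) • y‖ := by
  obtain ⟨ρ, hρ, hball⟩ := Metric.isOpen_iff.1 hK.isOpen_compl 0 h0
  have hlim : Tendsto (fun s => rexp (s / 2) * ρ) atTop atTop :=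
    (Real.tendsto_exp_atTop.comp (tendsto_id.atTop_div_const two_pos)).atTop_mul_const hρ
  filter_upwards [hlim.eventually_gt_atTop R] with s hs y hy
  have hy' : ρ ≤ ‖y‖ := by
    by_contra! h
    exact hball (mem_ball_zero_iff.2 h) hy
  rw [norm_smul, Real.norm_eq_abs, Real.abs_exp]
  exact hs.trans_le (by gcongr)

theorem eventually_lambdaB_le (hd : 3 ≤ d) (hA : ∀ j, Continuous (A · j)) {R : ℝ}
    {χ : EuclideanSpace ℝ (Fin d) → ℝ}
    (hχ : ∀ x, R < ‖x‖ → ContDiffAt ℝ ∞ χ x ∧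
      ∀ j, fderiv ℝ χ x (EuclideanSpace.single j 1) = A x j) {δ : ℝ} (hδ : 0 < δ) :
    ∀ᶠ s in atTop, lambdaB d A s ≤ 1 / 2 + δ := by
  obtain ⟨ψ, hψ, hc, h0, hpos, hle⟩ := exists_magneticForm_zero_le hd hδ
  filter_upwards [eventually_forall_lt_norm_exp_smul (isClosed_tsupport ψ) h0 R] with s hfar
  have hsmooth : ∀ y ∈ tsupport ψ, ContDiffAt ℝ ∞ (fun y => χ (rexp (s / 2) • y)) y :=
    fun y hy => (hχ _ (hfar y hy)).1.comp y (contDiffAt_id.const_smul _)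
  have hgrad : ∀ y ∈ tsupport ψ, ∀ j,
      fderiv ℝ (fun y => χ (rexp (s / 2) • y)) y (EuclideanSpace.single j 1) =
        scaledPotential A s y j - (0 : EuclideanSpace ℝ (Fin d) → Fin d → ℝ) y j :=
    fun y hy j => by
      rw [fderiv_comp_smul]
      simp [scaledPotential, (hχ _ (hfar y hy)).2 j]
  refine lambdaB_le_of_lsFormP_le hd hA (ψ := gaugeTransform (fun y => χ (rexp (s / 2) • y)) ψ)
    (contDiff_gaugeTransform hψ hsmooth) ?_ ?_ ?_
  · rwa [HasCompactSupport, tsupport_gaugeTransform]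
  · simpa only [norm_gaugeTransform] using hpos
  · rw [lsFormP_eq_magneticForm, magneticForm_gaugeTransform (hψ.differentiable (by simp))
      (fun y hy => (hsmooth y hy).differentiableAt (by simp)) hgrad]
    simpa only [norm_gaugeTransform] using hle

theorem tendsto_lambdaB_of_fderiv_eq (hd : 3 ≤ d) (hA : ∀ j, Continuous (A · j)) {R : ℝ}
    {χ : EuclideanSpace ℝ (Fin d) → ℝ}
    (hχ : ∀ x, R < ‖x‖ → ContDiffAt ℝ ∞ χ x ∧
      ∀ j, fderiv ℝ χ x (EuclideanSpace.single j 1) = A x j) :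
    Tendsto (lambdaB d A) atTop (𝓝 (1 / 2)) := by
  refine tendsto_order.2 ⟨fun a ha => .of_forall fun s => ha.trans_le (half_le_lambdaB hd hA s),
    fun b hb => ?_⟩
  filter_upwards [eventually_lambdaB_le hd hA hχ (half_pos (sub_pos.2 hb))] with s hs
  linarith

end LowestEigenvalue

theorem stmt18 (d : ℕ) (hd : 3 ≤ d)
    (B : EuclideanSpace ℝ (Fin d) → Fin d → Fin d → ℝ)
    (hBsmooth : ∀ j k, ContDiff ℝ (⊤ : ℕ∞) fun x => B x j k)
    (hBsupp : ∀ j k, HasCompactSupport fun x => B x j k)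
    (hBskew : ∀ x j k, B x k j = - B x j k)
    (hBclosed : ∀ (x : EuclideanSpace ℝ (Fin d)) (j k l : Fin d),
      fderiv ℝ (fun y => B y k l) x (EuclideanSpace.single j (1:ℝ))
      + fderiv ℝ (fun y => B y l j) x (EuclideanSpace.single k (1:ℝ))
      + fderiv ℝ (fun y => B y j k) x (EuclideanSpace.single l (1:ℝ)) = 0) :
    Tendsto (fun s => lambdaB d (poincareGauge d B) s) atTop (nhds (1/2 : ℝ)) := by
  obtain ⟨r, χ, hχ⟩ := exists_fderiv_eq_poincareGauge hd hBsmooth hBsupp hBskew hBclosed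
  exact tendsto_lambdaB_of_fderiv_eq hd (continuous_poincareGauge hBsmooth) hχ
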